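/- arXiv:2209.10688 — 4 statements merged into one kernel-verified Lean document; each statement's English description precedes it below -/
import Mathlib

section
/- Let f : ℝ → ℝ be measurable, locally integrable, and of polynomial growth (there exist c_f > 0 and q > 0 with |f(s)| ≤ c_f(1+|s|^q) for all s > 0), let F(s) := ∫₀^s f(u) du, g(x) := f(exp x), and G(x) := F(1) + ∫₀^x g(v) dv. Then for every x ∈ ℝ one has G(x) = F(exp x)·exp(−x) + ∫₀^x F(exp v)·exp(−v) dv. -/
open MeasureTheory intervalIntegral Real

/-!
The substitution `u = exp t` gives `F (exp v) = F 1 + ∫ t in 0..v, f (exp t) * exp t`, so `F ∘ exp`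
is absolutely continuous even though `f` need not be continuous anywhere. Integrating
`f (exp v) = (f (exp v) * exp v) * exp (-v)` by parts against the weight `exp (-v)` then yields the
identity.
-/

theorem integral_mul_eq_sub_of_eq_add_integral {h H w : ℝ → ℝ} {a b : ℝ}
    (hh : IntervalIntegrable h volume a b)
    (hH : ∀ v ∈ Set.uIcc a b, H v = H a + ∫ t in a..v, h t)
    (hw : AbsolutelyContinuousOnInterval w a b) :
    ∫ v in a..b, h v * w v = H b * w b - H a * w a - ∫ v in a..b, H v * deriv w v := by
  let P : ℝ → ℝ := fun v => H a + ∫ t in a..v, h t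
  have P_eq : ∀ v ∈ Set.uIcc a b, P v = H v := fun v hv => (hH v hv).symm
  have hP : AbsolutelyContinuousOnInterval P a b :=
    contDiffOn_const.absolutelyContinuousOnInterval.add
      (hh.absolutelyContinuousOnInterval_intervalIntegral Set.left_mem_uIcc)
  have deriv_P : ∫ v in a..b, deriv P v * w v = ∫ v in a..b, h v * w v := by
    refine integral_congr_ae ?_
    filter_upwards [hh.ae_hasDerivAt_integral] with v hderiv hv
    rw [((hderiv (Set.uIoc_subset_uIcc hv) a Set.left_mem_uIcc).const_add (H a)).deriv]
  have integral_P : ∫ v in a..b, P v * deriv w v = ∫ v in a..b, H v * deriv w v :=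
    integral_congr fun v hv => congrArg (· * deriv w v) (P_eq v hv)
  have by_parts := hP.integral_mul_deriv_eq_deriv_mul hw
  rw [deriv_P, integral_P, P_eq a Set.left_mem_uIcc, P_eq b Set.right_mem_uIcc] at by_parts
  linarith

section MonotoneSubstitution

variable {f φ φ' : ℝ → ℝ} {a b c : ℝ}

theorem integral_to_comp_eq_add_integral_comp_mul_deriv
    (hφ : ContinuousOn φ (Set.uIcc a b))
    (hφφ' : ∀ t ∈ Set.Ioo (min a b) (max a b), HasDerivAt φ (φ' t) t)
    (hφ' : ∀ t ∈ Set.Ioo (min a b) (max a b), 0 ≤ φ' t)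
    (hca : IntervalIntegrable f volume c (φ a)) (hab : IntervalIntegrable f volume (φ a) (φ b)) :
    ∫ u in c..φ b, f u = (∫ u in c..φ a, f u) + ∫ t in a..b, f (φ t) * φ' t := by
  rw [← integral_add_adjacent_intervals hca hab,
    ← integral_comp_mul_deriv_of_deriv_nonneg hφ hφφ' hφ']
  rfl

theorem integral_comp_mul_deriv_mul_eq_sub {w : ℝ → ℝ}
    (hφ : ContinuousOn φ (Set.uIcc a b))
    (hφφ' : ∀ t ∈ Set.Ioo (min a b) (max a b), HasDerivAt φ (φ' t) t)
    (hφ' : ∀ t ∈ Set.Ioo (min a b) (max a b), 0 ≤ φ' t)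
    (hca : IntervalIntegrable f volume c (φ a)) (hab : IntervalIntegrable f volume (φ a) (φ b))
    (hw : AbsolutelyContinuousOnInterval w a b) :
    ∫ v in a..b, f (φ v) * φ' v * w v =
      (∫ u in c..φ b, f u) * w b - (∫ u in c..φ a, f u) * w a
        - ∫ v in a..b, (∫ u in c..φ v, f u) * deriv w v := by
  have integrable_comp : IntervalIntegrable (fun t => f (φ t) * φ' t) volume a b :=
    (integrable_comp_mul_deriv_iff_of_deriv_nonneg hφ hφφ' hφ').2 hab
  refine integral_mul_eq_sub_of_eq_add_integral (H := fun v => ∫ u in c..φ v, f u)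
    integrable_comp (fun v hv => ?_) hw
  have uIcc_sub : Set.uIcc a v ⊆ Set.uIcc a b := Set.uIcc_subset_uIcc_left hv
  have Ioo_sub : Set.Ioo (min a v) (max a v) ⊆ Set.Ioo (min a b) (max a b) :=
    Set.Ioo_subset_Ioo (le_min (min_le_left a b) hv.1) (max_le (le_max_left a b) hv.2)
  have hφ_v := hφ.mono uIcc_sub
  have hφφ'_v := fun t ht => hφφ' t (Ioo_sub ht)
  have hφ'_v := fun t ht => hφ' t (Ioo_sub ht)
  exact integral_to_comp_eq_add_integral_comp_mul_deriv hφ_v hφφ'_v hφ'_v hca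
    ((integrable_comp_mul_deriv_iff_of_deriv_nonneg hφ_v hφφ'_v hφ'_v).1
      (integrable_comp.mono_set uIcc_sub))

end MonotoneSubstitution

theorem stmt_0_general {f : ℝ → ℝ} {x : ℝ} (hf_one : IntervalIntegrable f volume 0 1)
    (hf_exp : IntervalIntegrable f volume 0 (exp x)) :
    (∫ u in (0 : ℝ)..1, f u) + ∫ v in (0 : ℝ)..x, f (exp v) =
      (∫ u in (0 : ℝ)..exp x, f u) * exp (-x)
        + ∫ v in (0 : ℝ)..x, (∫ u in (0 : ℝ)..exp v, f u) * exp (-v) := by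
  have weight_ac : AbsolutelyContinuousOnInterval (fun v => exp (-v)) 0 x :=
    contDiff_neg.exp.contDiffOn.absolutelyContinuousOnInterval
  have deriv_weight (v : ℝ) : deriv (fun v => exp (-v)) v = -exp (-v) := by
    simpa using (hasDerivAt_neg v).exp.deriv
  have exp_mul_weight (v : ℝ) : f (exp v) * exp v * exp (-v) = f (exp v) := by
    rw [mul_assoc, ← exp_add, add_neg_cancel, exp_zero, mul_one]
  have by_parts := integral_comp_mul_deriv_mul_eq_sub (f := f) (c := 0)
    continuous_exp.continuousOn (fun t _ => hasDerivAt_exp t) (fun t _ => (exp_pos t).le)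
    (by rwa [exp_zero]) (by rw [exp_zero]; exact hf_one.symm.trans hf_exp) weight_ac
  simp only [exp_mul_weight, deriv_weight, mul_neg, intervalIntegral.integral_neg, exp_zero,
    neg_zero, mul_one] at by_parts
  linarith

/-- For `f` measurable, locally integrable and of polynomial growth, with
`F s = ∫₀^s f`, `g x = f (exp x)`, `G x = F 1 + ∫₀^x g`, one has
`G x = F (exp x) * exp (-x) + ∫₀^x F (exp v) * exp (-v) dv`. -/
theorem stmt_0
    (f : ℝ → ℝ) (hf_meas : Measurable f)
    (hf_loc : MeasureTheory.LocallyIntegrable f volume)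
    (c_f q : ℝ) (hc : 0 < c_f) (hq : 0 < q)
    (hpg : ∀ s : ℝ, 0 < s → |f s| ≤ c_f * (1 + |s| ^ q))
    (F g G : ℝ → ℝ)
    (hF : ∀ s : ℝ, F s = ∫ u in (0:ℝ)..s, f u)
    (hg : ∀ x : ℝ, g x = f (Real.exp x))
    (hG : ∀ x : ℝ, G x = F 1 + ∫ v in (0:ℝ)..x, g v) :
    ∀ x : ℝ,
      G x = F (Real.exp x) * Real.exp (-x)
        + ∫ v in (0:ℝ)..x, F (Real.exp v) * Real.exp (-v) := by
  intro x
  have hf_int (s : ℝ) : IntervalIntegrable f volume 0 s :=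
    (hf_loc.integrableOn_isCompact isCompact_uIcc).intervalIntegrable
  simpa only [hG, hF, hg] using stmt_0_general (hf_int 1) (hf_int (exp x))
end

section
/- Let f : ℝ → ℝ be measurable, locally integrable, and of polynomial growth (there exist c_f > 0 and q > 0 with |f(s)| ≤ c_f(1+|s|^q) for all s > 0), let F(s) := ∫₀^s f(u) du, let d ≥ 1, α₁, …, α_d > 0, and define G₁(x₁,…,x_d) := F(∑_{i=1}^d αᵢ exp(xᵢ)) / (α₁ exp(x₁)). Then for all x, x' ∈ ℝ^d with ∑_{i=1}^d αᵢ exp(xᵢ) > ∑_{i=1}^d αᵢ exp(xᵢ'), one has |G₁(x) − G₁(x')| ≤ c_f (exp(−x₁)/α₁)(1 + (∑_{i=1}^d αᵢ exp(xᵢ))^q) ∑_{j=1}^d α_j exp(max(x_j, x_j')) |x_j − x_j'| + (c_f/α₁)(∑_{i=1}^d αᵢ exp(xᵢ') + (1/(q+1))(∑_{i=1}^d αᵢ exp(xᵢ'))^{q+1}) exp(−min(x₁, x₁')) |x₁ − x₁'|. -/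
open MeasureTheory intervalIntegral Real Finset

/-!
Write `V` and `V'` for the basket values at `x` and `x'`, and `F` for the primitive of `f`. Then
`G₁ x - G₁ x' = (F V - F V') * (exp (-x₁) / α₁) + F V' * (exp (-x₁) - exp (-x₁')) / α₁`.
The growth of `f` bounds `F V - F V'` by a multiple of `V - V'` and bounds `F V'` by integrating
`1 + u ^ q`; the increments of `V` and of `exp (-x₁)` are controlled by the local Lipschitz bound
`|exp a - exp b| ≤ exp (max a b) * |a - b|`.
-/

section Exponential

theorem exp_sub_exp_le_exp_mul_sub (a b : ℝ) : exp a - exp b ≤ exp a * (a - b) :=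
  calc exp a - exp b = exp a * (1 - exp (b - a)) := by
        rw [mul_sub, mul_one, ← exp_add, add_sub_cancel]
    _ ≤ exp a * (a - b) := by
        refine mul_le_mul_of_nonneg_left ?_ (exp_pos a).le
        linarith [add_one_le_exp (b - a)]

theorem abs_exp_sub_exp_le (a b : ℝ) : |exp a - exp b| ≤ exp (max a b) * |a - b| := by
  wlog hba : b ≤ a generalizing a b
  · simpa only [abs_sub_comm, max_comm] using this b a (le_of_not_ge hba)
  rw [max_eq_left hba, abs_of_nonneg (sub_nonneg.2 (exp_le_exp.2 hba)),
    abs_of_nonneg (sub_nonneg.2 hba)]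
  exact exp_sub_exp_le_exp_mul_sub a b

theorem abs_exp_neg_sub_exp_neg_le (a b : ℝ) :
    |exp (-a) - exp (-b)| ≤ exp (-min a b) * |a - b| := by
  simpa only [max_neg_neg, neg_sub_neg, abs_sub_comm b a] using abs_exp_sub_exp_le (-a) (-b)

end Exponential

section PowerGrowth

variable {E : Type*} [NormedAddCommGroup E] {f : ℝ → E} {c q : ℝ}

theorem nonneg_of_norm_le_one_add_rpow (hgrowth : ∀ s, 0 < s → ‖f s‖ ≤ c * (1 + s ^ q)) :
    0 ≤ c :=
  nonneg_of_mul_nonneg_left ((norm_nonneg _).trans (hgrowth 1 one_pos)) (by positivity)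

theorem intervalIntegrable_one_add_rpow (hq : -1 < q) (a b : ℝ) :
    IntervalIntegrable (fun u : ℝ => 1 + u ^ q) volume a b :=
  intervalIntegrable_const.add (intervalIntegrable_rpow' hq)

theorem integral_zero_one_add_rpow (hq : -1 < q) (b : ℝ) :
    ∫ u in (0 : ℝ)..b, (1 + u ^ q) = b + 1 / (q + 1) * b ^ (q + 1) := by
  rw [integral_add intervalIntegrable_const (intervalIntegrable_rpow' hq),
    intervalIntegral.integral_const, integral_rpow (Or.inl hq), zero_rpow (by linarith),
    smul_eq_mul]
  ring

theorem intervalIntegrable_of_norm_le_one_add_rpow (hq : -1 < q)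
    (hf : AEStronglyMeasurable f (volume.restrict (Set.Ioi 0)))
    (hgrowth : ∀ s, 0 < s → ‖f s‖ ≤ c * (1 + s ^ q)) {b : ℝ} (hb : 0 ≤ b) :
    IntervalIntegrable f volume 0 b := by
  have hsub : Set.uIoc 0 b ⊆ Set.Ioi 0 := Set.uIoc_of_le hb ▸ Set.Ioc_subset_Ioi_self
  refine ((intervalIntegrable_one_add_rpow hq 0 b).const_mul c).mono_fun' (hf.mono_set hsub) ?_
  exact ae_restrict_of_forall_mem measurableSet_uIoc fun u hu => hgrowth u (hsub hu)

variable [NormedSpace ℝ E]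

theorem norm_integral_le_of_norm_le_one_add_rpow (hq : 0 ≤ q)
    (hgrowth : ∀ s, 0 < s → ‖f s‖ ≤ c * (1 + s ^ q)) {a b : ℝ} (ha : 0 ≤ a) (hab : a ≤ b) :
    ‖∫ u in a..b, f u‖ ≤ c * (1 + b ^ q) * (b - a) := by
  have hc : 0 ≤ c := nonneg_of_norm_le_one_add_rpow hgrowth
  rw [← abs_of_nonneg (sub_nonneg.2 hab)]
  refine intervalIntegral.norm_integral_le_of_norm_le_const fun u hu => ?_
  rw [Set.uIoc_of_le hab] at hu
  have hu_pos : 0 < u := ha.trans_lt hu.1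
  calc ‖f u‖ ≤ c * (1 + u ^ q) := hgrowth u hu_pos
    _ ≤ c * (1 + b ^ q) := by
        gcongr
        exact hu.2

theorem norm_integral_zero_le_of_norm_le_one_add_rpow (hq : -1 < q)
    (hgrowth : ∀ s, 0 < s → ‖f s‖ ≤ c * (1 + s ^ q)) {b : ℝ} (hb : 0 ≤ b) :
    ‖∫ u in (0 : ℝ)..b, f u‖ ≤ c * (b + 1 / (q + 1) * b ^ (q + 1)) := by
  rw [← integral_zero_one_add_rpow hq, ← intervalIntegral.integral_const_mul]
  exact intervalIntegral.norm_integral_le_of_norm_le hb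
    (Filter.Eventually.of_forall fun u hu => hgrowth u hu.1)
    ((intervalIntegrable_one_add_rpow hq 0 b).const_mul c)

end PowerGrowth

section Basket

variable {ι : Type*} [Fintype ι]

/-- The value `∑ i, αᵢ exp (xᵢ)` of a basket of assets with weights `α` and log-prices `x`. -/
noncomputable def basketValue (α x : ι → ℝ) : ℝ :=
  ∑ i, α i * exp (x i)

/-- The functional `G` of the log-prices `x`: the primitive of `f` vanishing at `0`, evaluated at
the basket value and divided by the contribution of asset `i₀`. The paper's `G₁` is the case where
`i₀` is the first asset. -/
noncomputable def basketRatio (f : ℝ → ℝ) (α : ι → ℝ) (i₀ : ι) (x : ι → ℝ) : ℝ :=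
  (∫ u in (0 : ℝ)..basketValue α x, f u) / (α i₀ * exp (x i₀))

variable {α : ι → ℝ}

theorem basketValue_nonneg (hα : ∀ i, 0 ≤ α i) (x : ι → ℝ) : 0 ≤ basketValue α x :=
  sum_nonneg fun i _ => mul_nonneg (hα i) (exp_pos _).le

theorem basketValue_sub_le (hα : ∀ i, 0 ≤ α i) (x x' : ι → ℝ) :
    basketValue α x - basketValue α x' ≤ ∑ j, α j * exp (max (x j) (x' j)) * |x j - x' j| := by
  rw [basketValue, basketValue, ← sum_sub_distrib]
  gcongr with j
  rw [← mul_sub, mul_assoc]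
  exact mul_le_mul_of_nonneg_left ((le_abs_self _).trans (abs_exp_sub_exp_le _ _)) (hα j)

theorem norm_integral_basketValue_sub_le {E : Type*} [NormedAddCommGroup E] [NormedSpace ℝ E]
    {f : ℝ → E} {c q : ℝ} (hq : 0 ≤ q)
    (hf : AEStronglyMeasurable f (volume.restrict (Set.Ioi 0)))
    (hgrowth : ∀ s, 0 < s → ‖f s‖ ≤ c * (1 + s ^ q)) (hα : ∀ i, 0 ≤ α i) {x x' : ι → ℝ}
    (hle : basketValue α x' ≤ basketValue α x) :
    ‖(∫ u in (0 : ℝ)..basketValue α x, f u) - ∫ u in (0 : ℝ)..basketValue α x', f u‖ ≤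
      c * (1 + basketValue α x ^ q) * ∑ j, α j * exp (max (x j) (x' j)) * |x j - x' j| := by
  have hc : 0 ≤ c := nonneg_of_norm_le_one_add_rpow hgrowth
  have hintegrable (y : ι → ℝ) : IntervalIntegrable f volume 0 (basketValue α y) :=
    intervalIntegrable_of_norm_le_one_add_rpow (by linarith) hf hgrowth (basketValue_nonneg hα y)
  have hV : 0 ≤ basketValue α x := basketValue_nonneg hα x
  rw [integral_interval_sub_left (hintegrable x) (hintegrable x')]
  calc ‖∫ u in basketValue α x'..basketValue α x, f u‖
      ≤ c * (1 + basketValue α x ^ q) * (basketValue α x - basketValue α x') :=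
        norm_integral_le_of_norm_le_one_add_rpow hq hgrowth (basketValue_nonneg hα x') hle
    _ ≤ c * (1 + basketValue α x ^ q) * ∑ j, α j * exp (max (x j) (x' j)) * |x j - x' j| := by
        gcongr
        exact basketValue_sub_le hα x x'

theorem basketRatio_sub_basketRatio (f : ℝ → ℝ) (α : ι → ℝ) (i₀ : ι) (x x' : ι → ℝ) :
    basketRatio f α i₀ x - basketRatio f α i₀ x' =
      ((∫ u in (0 : ℝ)..basketValue α x, f u) - ∫ u in (0 : ℝ)..basketValue α x', f u)
          * (exp (-x i₀) / α i₀)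
        + (∫ u in (0 : ℝ)..basketValue α x', f u) / α i₀ * (exp (-x i₀) - exp (-x' i₀)) := by
  simp only [basketRatio, exp_neg, div_eq_mul_inv, mul_inv]
  ring

theorem stmt_3_general {f : ℝ → ℝ} {c q : ℝ} (hq : 0 ≤ q)
    (hf : AEStronglyMeasurable f (volume.restrict (Set.Ioi 0)))
    (hgrowth : ∀ s, 0 < s → |f s| ≤ c * (1 + s ^ q))
    (hα : ∀ i, 0 ≤ α i) {i₀ : ι} (hα₀ : 0 < α i₀) {x x' : ι → ℝ}
    (hle : basketValue α x' ≤ basketValue α x) :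
    |basketRatio f α i₀ x - basketRatio f α i₀ x'| ≤
      c * (exp (-x i₀) / α i₀) * (1 + basketValue α x ^ q)
          * (∑ j, α j * exp (max (x j) (x' j)) * |x j - x' j|)
        + c / α i₀ * (basketValue α x' + 1 / (q + 1) * basketValue α x' ^ (q + 1))
          * exp (-min (x i₀) (x' i₀)) * |x i₀ - x' i₀| := by
  set V := basketValue α x
  set V' := basketValue α x'
  have hc : 0 ≤ c := nonneg_of_norm_le_one_add_rpow (f := f) hgrowth
  have hq' : -1 < q := by linarith
  have hV' : 0 ≤ V' := basketValue_nonneg hα x'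
  have hincrement : |(∫ u in (0 : ℝ)..V, f u) - ∫ u in (0 : ℝ)..V', f u| ≤
      c * (1 + V ^ q) * ∑ j, α j * exp (max (x j) (x' j)) * |x j - x' j| :=
    norm_integral_basketValue_sub_le hq hf hgrowth hα hle
  have hprimitive : |∫ u in (0 : ℝ)..V', f u| ≤ c * (V' + 1 / (q + 1) * V' ^ (q + 1)) :=
    norm_integral_zero_le_of_norm_le_one_add_rpow (f := f) hq' hgrowth hV'
  rw [basketRatio_sub_basketRatio]
  refine (abs_add_le _ _).trans (add_le_add ?_ ?_)
  · rw [abs_mul, abs_of_pos (div_pos (exp_pos _) hα₀)]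
    calc |(∫ u in (0 : ℝ)..V, f u) - ∫ u in (0 : ℝ)..V', f u| * (exp (-x i₀) / α i₀)
        ≤ c * (1 + V ^ q) * (∑ j, α j * exp (max (x j) (x' j)) * |x j - x' j|)
          * (exp (-x i₀) / α i₀) := by gcongr
      _ = _ := by ring
  · rw [abs_mul, abs_div, abs_of_pos hα₀]
    calc |∫ u in (0 : ℝ)..V', f u| / α i₀ * |exp (-x i₀) - exp (-x' i₀)|
        ≤ c * (V' + 1 / (q + 1) * V' ^ (q + 1)) / α i₀
          * (exp (-min (x i₀) (x' i₀)) * |x i₀ - x' i₀|) := by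
          gcongr
          exact abs_exp_neg_sub_exp_neg_le (x i₀) (x' i₀)
      _ = _ := by ring

end Basket

/-- Local Lipschitz estimate for the basket functional
`G₁ x = F (∑ i, αᵢ exp (xᵢ)) / (α₁ exp (x₁))`. -/
theorem stmt_3
    (f : ℝ → ℝ) (hf_meas : Measurable f)
    (hf_loc : MeasureTheory.LocallyIntegrable f volume)
    (c_f q : ℝ) (hc : 0 < c_f) (hq : 0 < q)
    (hpg : ∀ s : ℝ, 0 < s → |f s| ≤ c_f * (1 + |s| ^ q))
    (F : ℝ → ℝ)
    (hF : ∀ s : ℝ, F s = ∫ u in (0:ℝ)..s, f u)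
    (d : ℕ) (hd : 1 ≤ d)
    (α : Fin d → ℝ) (hα : ∀ i, 0 < α i)
    (G₁ : (Fin d → ℝ) → ℝ)
    (hG₁ : ∀ x : Fin d → ℝ,
      G₁ x = F (∑ i, α i * Real.exp (x i)) / (α ⟨0, hd⟩ * Real.exp (x ⟨0, hd⟩))) :
    ∀ x x' : Fin d → ℝ,
      (∑ i, α i * Real.exp (x' i)) < (∑ i, α i * Real.exp (x i)) →
      |G₁ x - G₁ x'|
        ≤ c_f * (Real.exp (-(x ⟨0, hd⟩)) / α ⟨0, hd⟩)
            * (1 + (∑ i, α i * Real.exp (x i)) ^ q)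
            * (∑ j, α j * Real.exp (max (x j) (x' j)) * |x j - x' j|)
          + (c_f / α ⟨0, hd⟩)
            * ((∑ i, α i * Real.exp (x' i))
                + (1 / (q + 1)) * (∑ i, α i * Real.exp (x' i)) ^ (q + 1))
            * Real.exp (-(min (x ⟨0, hd⟩) (x' ⟨0, hd⟩)))
            * |x ⟨0, hd⟩ - x' ⟨0, hd⟩| := by
  intro x x' hlt
  simpa only [basketRatio, basketValue, ← hF, ← hG₁] using
    stmt_3_general hq.le hf_meas.aestronglyMeasurable
      (fun s hs => by simpa only [abs_of_pos hs] using hpg s hs)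
      (fun i => (hα i).le) (hα ⟨0, hd⟩) hlt.le
end

section
/- Let k ≥ 1, let φ : ℝ → ℝ be infinitely differentiable with compact support, φ(x) = x whenever |x| ≤ 1, and |φ(x)| ≤ |x| for all x ∈ ℝ. Let f : ℝ^k → ℝ be continuously differentiable and fix j ∈ {1,…,k}. Assume that either ∂f/∂x_j is bounded on ℝ^k, or there exist sequences (r_n)_{n≥1} and (s_n)_{n≥1} with r_n → ∞ and s_n → ∞ such that, for all n and all x ∈ ℝ^k, |∂f/∂x_j(x)| ≥ s_n implies |f(x)| ≥ r_n. Then for every m ≥ 1 the function f_m(x) := m·φ(f(x)/m) is continuously differentiable and its partial derivative ∂f_m/∂x_j is bounded on ℝ^k. -/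
open Filter Real

/-!
By the chain rule the derivative of `m * φ (f / m)` in a direction `v` is `φ' (f / m) * ∂ᵥf`.
The first factor is bounded and vanishes unless `f` lies in a fixed bounded set, so it is enough
that `∂ᵥf` is bounded wherever `f` is. Both alternatives on the partial derivative give this.
-/

section NormControlledBy

variable {α G F : Type*}

/-- `g` is bounded on every set on which `f` is bounded. Applied with `g` a directional derivative
of `f`, this is a common weakening of the paper's two alternatives (bounded, or large only where
`f` is large). -/
def NormControlledBy [Norm G] [Norm F] (g : α → G) (f : α → F) : Prop :=
  ∀ R : ℝ, ∃ S : ℝ, ∀ x, ‖f x‖ ≤ R → ‖g x‖ ≤ S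

variable {g : α → G} {f : α → F}

theorem normControlledBy_of_bounded [Norm G] [Norm F] (hg : ∃ C : ℝ, ∀ x, ‖g x‖ ≤ C) :
    NormControlledBy g f :=
  let ⟨C, hC⟩ := hg
  fun _ => ⟨C, fun x _ => hC x⟩

theorem normControlledBy_of_tendsto [Norm G] [Norm F] {ι : Type*} {l : Filter ι} [l.NeBot]
    {r s : ι → ℝ} (hr : Tendsto r l atTop) (hrs : ∀ i x, s i ≤ ‖g x‖ → r i ≤ ‖f x‖) :
    NormControlledBy g f := by
  intro R
  obtain ⟨i, hi⟩ := (hr.eventually_gt_atTop R).exists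
  refine ⟨s i, fun x hx => ?_⟩
  by_contra! hgx
  exact (hi.trans_le (hrs i x hgx.le)).not_ge hx

theorem NormControlledBy.const_smul_right {𝕜 : Type*} [NormedField 𝕜] [Norm G]
    [SeminormedAddCommGroup F] [NormedSpace 𝕜 F]
    (hgf : NormControlledBy g f) {c : 𝕜} (hc : c ≠ 0) : NormControlledBy g (c • f) := by
  intro R
  obtain ⟨S, hS⟩ := hgf (R / ‖c‖)
  refine ⟨S, fun x hx => hS x ?_⟩
  rwa [le_div_iff₀' (norm_pos_iff.mpr hc), ← norm_smul]

theorem NormControlledBy.exists_norm_comp_smul_le {𝕜 : Type*} [NormedField 𝕜]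
    [SeminormedAddCommGroup G] [NormedSpace 𝕜 G] [SeminormedAddCommGroup F]
    (hgf : NormControlledBy g f) {ψ : F → 𝕜} (hψ : Continuous ψ)
    (hψ_supp : HasCompactSupport ψ) : ∃ C : ℝ, ∀ x, ‖ψ (f x) • g x‖ ≤ C := by
  obtain ⟨K, hK⟩ := hψ.bounded_above_of_compact_support hψ_supp
  obtain ⟨R, hR⟩ := hψ_supp.isCompact.isBounded.exists_norm_le
  obtain ⟨S, hS⟩ := hgf R
  have hK_nonneg : 0 ≤ K := (norm_nonneg _).trans (hK 0)
  refine ⟨K * |S|, fun x => ?_⟩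
  rw [norm_smul]
  by_cases hx : f x ∈ tsupport ψ
  · have hgx : ‖g x‖ ≤ |S| := (hS x (hR _ hx)).trans (le_abs_self S)
    exact mul_le_mul (hK _) hgx (norm_nonneg _) hK_nonneg
  · rw [image_eq_zero_of_notMem_tsupport hx, norm_zero, zero_mul]
    exact mul_nonneg hK_nonneg (abs_nonneg S)

end NormControlledBy

section Compression

/-- The compression of `f` by the profile `φ` at level `m`, written `fₘ` in the paper for a
natural number `m`. At `m = 0` it is the zero function. -/
def compression {α 𝕜 : Type*} [DivisionRing 𝕜] (φ : 𝕜 → 𝕜) (m : 𝕜) (f : α → 𝕜) (x : α) : 𝕜 :=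
  m * φ (f x / m)

variable {𝕜 E : Type*} [NontriviallyNormedField 𝕜] [NormedAddCommGroup E] [NormedSpace 𝕜 E]
variable {φ : 𝕜 → 𝕜} {f : E → 𝕜} {m : 𝕜}

theorem contDiff_compression {n : WithTop ℕ∞} (hφ : ContDiff 𝕜 n φ) (hf : ContDiff 𝕜 n f) (m : 𝕜) :
    ContDiff 𝕜 n (compression φ m f) :=
  contDiff_const.mul (hφ.comp (hf.div_const m))

theorem fderiv_compression {x : E} (hm : m ≠ 0) (hφ : DifferentiableAt 𝕜 φ (f x / m))
    (hf : DifferentiableAt 𝕜 f x) :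
    fderiv 𝕜 (compression φ m f) x = deriv φ (f x / m) • fderiv 𝕜 f x := by
  have hf_div : HasFDerivAt (fun y => f y / m) (m⁻¹ • fderiv 𝕜 f x) x := by
    simpa only [div_eq_mul_inv] using hf.hasFDerivAt.mul_const m⁻¹
  have hcomp : HasFDerivAt (compression φ m f)
      (m • deriv φ (f x / m) • m⁻¹ • fderiv 𝕜 f x) x :=
    (hφ.hasDerivAt.comp_hasFDerivAt x hf_div).const_mul m
  rw [hcomp.fderiv, smul_comm m, smul_inv_smul₀ hm]

theorem stmt_6_general (hφ : ContDiff 𝕜 1 φ) (hφ_supp : HasCompactSupport (deriv φ))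
    (hf : ContDiff 𝕜 1 f) {v : E} (hfv : NormControlledBy (fun x => fderiv 𝕜 f x v) f)
    (hm : m ≠ 0) :
    ContDiff 𝕜 1 (compression φ m f) ∧
      ∃ C : ℝ, ∀ x, ‖fderiv 𝕜 (compression φ m f) x v‖ ≤ C := by
  refine ⟨contDiff_compression hφ hf m, ?_⟩
  obtain ⟨C, hC⟩ := (hfv.const_smul_right (inv_ne_zero hm)).exists_norm_comp_smul_le
    (hφ.continuous_deriv le_rfl) hφ_supp
  refine ⟨C, fun x => ?_⟩
  rw [fderiv_compression hm (hφ.differentiable one_ne_zero _) (hf.differentiable one_ne_zero x)]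
  simpa only [Pi.smul_apply, smul_apply, smul_eq_mul, inv_mul_eq_div] using hC x

end Compression

/-- For a smooth compactly supported `φ` with `φ x = x` on `|x| ≤ 1` and
`|φ x| ≤ |x|`, and a `C¹` function `f : ℝ^k → ℝ` whose `j`-th partial derivative is either
bounded or compressible (large partial derivative forces large `|f|` along suitable
sequences), the compression `fₘ x = m φ (f x / m)` is `C¹` with bounded `j`-th partial
derivative, for every `m ≥ 1`. -/
theorem stmt_6
    (k : ℕ) (hk : 1 ≤ k)
    (φ : ℝ → ℝ) (hφ_smooth : ContDiff ℝ (⊤ : ℕ∞) φ) (hφ_supp : HasCompactSupport φ)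
    (hφ_id : ∀ x : ℝ, |x| ≤ 1 → φ x = x)
    (hφ_le : ∀ x : ℝ, |φ x| ≤ |x|)
    (f : (Fin k → ℝ) → ℝ) (hf : ContDiff ℝ 1 f)
    (j : Fin k)
    (hyp : (∃ C : ℝ, ∀ x : Fin k → ℝ, |fderiv ℝ f x (Pi.single j 1)| ≤ C)
        ∨ (∃ r s : ℕ → ℝ,
            Tendsto r atTop atTop ∧ Tendsto s atTop atTop ∧
            ∀ (n : ℕ) (x : Fin k → ℝ),
              s n ≤ |fderiv ℝ f x (Pi.single j 1)| → r n ≤ |f x|)) :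
    ∀ m : ℕ, 1 ≤ m →
      ContDiff ℝ 1 (fun x : Fin k → ℝ => (m : ℝ) * φ (f x / (m : ℝ)))
        ∧ ∃ C : ℝ, ∀ x : Fin k → ℝ,
            |fderiv ℝ (fun x : Fin k → ℝ => (m : ℝ) * φ (f x / (m : ℝ))) x
              (Pi.single j 1)| ≤ C := by
  intro m hm
  simp only [← norm_eq_abs] at hyp ⊢
  have hfj : NormControlledBy (fun x => fderiv ℝ f x (Pi.single j 1)) f :=
    hyp.elim normControlledBy_of_bounded fun ⟨_, _, hr, _, hrs⟩ =>
      normControlledBy_of_tendsto hr hrs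
  exact stmt_6_general (hφ_smooth.of_le (mod_cast le_top)) hφ_supp.deriv hf hfj
    (Nat.cast_ne_zero.mpr (Nat.one_le_iff_ne_zero.mp hm))
end

section
/- Let φ < ψ be real numbers, let c > 0, c' > 0, γ > 0 and y* ∈ (0, (ψ−φ)/2), and let b : (φ, ψ) → ℝ be continuously differentiable with b'(y) < c for all y ∈ (φ, ψ), b(y) ≥ c'/(y − φ)^γ for all y ∈ (φ, φ + y*], and b(y) ≤ −c'/(ψ − y)^γ for all y ∈ [ψ − y*, ψ). Then for every Δ with 0 < Δ < 1/c, the map β(y) := y − Δ·b(y) is strictly increasing on (φ, ψ), satisfies β'(y) > 1 − Δc > 0 for all y ∈ (φ, ψ), and is a bijection from (φ, ψ) onto ℝ. In particular, for every z ∈ ℝ there is a unique y ∈ (φ, ψ) with y − Δ·b(y) = z. -/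
open Real Set

/-!
The bound `b' < c` together with `Δ * c < 1` keeps the derivative `1 - Δ * b'` of
`β y = y - Δ * b y` positive, so `β` is injective on `(φ, ψ)`. The drift explodes to `+∞` at `φ`
and to `-∞` at `ψ`, so `β` tends to `-∞` at `φ` and to `+∞` at `ψ`, and the intermediate value
theorem makes it surjective.
-/

open Filter Topology

theorem existsUnique_mem_and_eq_of_bijOn {α β : Type*} {f : α → β} {s : Set α} {t : Set β}
    (hf : BijOn f s t) {z : β} (hz : z ∈ t) : ∃! x, x ∈ s ∧ f x = z := by
  obtain ⟨x, hx, hxz⟩ := hf.surjOn hz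
  exact ⟨x, ⟨hx, hxz⟩, fun y ⟨hy, hyz⟩ => hf.injOn hy hx (hyz.trans hxz.symm)⟩

section OneSidedLimits

variable {G : Type*} [AddCommGroup G] [LinearOrder G] [IsOrderedAddMonoid G] [TopologicalSpace G]
  [IsTopologicalAddGroup G]

theorem tendsto_sub_const_nhdsGT_zero (a : G) : Tendsto (fun x => x - a) (𝓝[>] a) (𝓝[>] 0) := by
  refine tendsto_nhdsWithin_iff.2 ⟨?_, ?_⟩
  · exact (tendsto_sub_nhds_zero_iff.2 tendsto_id).mono_left nhdsWithin_le_nhds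
  · filter_upwards [self_mem_nhdsWithin] with x hx using sub_pos.2 hx

theorem tendsto_const_sub_nhdsLT_zero (a : G) : Tendsto (fun x => a - x) (𝓝[<] a) (𝓝[>] 0) := by
  refine tendsto_nhdsWithin_iff.2 ⟨?_, ?_⟩
  · exact ((continuous_const.sub continuous_id).tendsto' a 0 (sub_self a)).mono_left
      nhdsWithin_le_nhds
  · filter_upwards [self_mem_nhdsWithin] with x hx using sub_pos.2 hx

end OneSidedLimits

section PowerBlowUp

variable {C γ : ℝ}

theorem tendsto_const_div_rpow_nhdsGT_zero (hC : 0 < C) (hγ : 0 < γ) :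
    Tendsto (fun x : ℝ => C / x ^ γ) (𝓝[>] 0) atTop := by
  refine ((tendsto_rpow_neg_nhdsGT_zero (neg_neg_of_pos hγ)).const_mul_atTop hC).congr' ?_
  filter_upwards [self_mem_nhdsWithin] with x (hx : 0 < x)
  rw [rpow_neg hx.le, div_eq_mul_inv]

theorem tendsto_nhdsGT_atTop_of_const_div_rpow_le {b : ℝ → ℝ} {φ : ℝ} (hC : 0 < C) (hγ : 0 < γ)
    (hb : ∀ᶠ y in 𝓝[>] φ, C / (y - φ) ^ γ ≤ b y) : Tendsto b (𝓝[>] φ) atTop :=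
  tendsto_atTop_mono' _ hb <|
    (tendsto_const_div_rpow_nhdsGT_zero hC hγ).comp (tendsto_sub_const_nhdsGT_zero φ)

theorem tendsto_nhdsLT_atBot_of_le_neg_const_div_rpow {b : ℝ → ℝ} {ψ : ℝ} (hC : 0 < C)
    (hγ : 0 < γ) (hb : ∀ᶠ y in 𝓝[<] ψ, b y ≤ -(C / (ψ - y) ^ γ)) : Tendsto b (𝓝[<] ψ) atBot :=
  tendsto_atBot_mono' _ hb <| tendsto_neg_atTop_atBot.comp <|
    (tendsto_const_div_rpow_nhdsGT_zero hC hγ).comp (tendsto_const_sub_nhdsLT_zero ψ)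

end PowerBlowUp

section SubConstMul

variable {α : Type*} {l : Filter α} {u v : α → ℝ} {a Δ : ℝ}

theorem tendsto_sub_const_mul_atBot (hΔ : 0 < Δ) (hu : Tendsto u l (𝓝 a))
    (hv : Tendsto v l atTop) : Tendsto (fun x => u x - Δ * v x) l atBot := by
  simpa only [sub_eq_add_neg, Function.comp_apply] using
    hu.add_atBot (tendsto_neg_atTop_atBot.comp (hv.const_mul_atTop hΔ))

theorem tendsto_sub_const_mul_atTop (hΔ : 0 < Δ) (hu : Tendsto u l (𝓝 a))
    (hv : Tendsto v l atBot) : Tendsto (fun x => u x - Δ * v x) l atTop := by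
  simpa only [sub_eq_add_neg, Function.comp_apply] using
    hu.add_atTop (tendsto_neg_atBot_atTop.comp (hv.const_mul_atBot hΔ))

end SubConstMul

theorem strictMonoOn_of_forall_hasDerivAt_pos {f f' : ℝ → ℝ} {s : Set ℝ} (hs : Convex ℝ s)
    (hf : ∀ x ∈ s, HasDerivAt f (f' x) x) (hf' : ∀ x ∈ s, 0 < f' x) : StrictMonoOn f s :=
  strictMonoOn_of_hasDerivWithinAt_pos hs (HasDerivAt.continuousOn hf)
    (fun x hx => (hf x (interior_subset hx)).hasDerivWithinAt)
    (fun x hx => hf' x (interior_subset hx))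

theorem surjOn_Ioo_univ_of_tendsto {α β : Type*} [ConditionallyCompleteLinearOrder α]
    [TopologicalSpace α] [OrderTopology α] [DenselyOrdered α] [LinearOrder β] [TopologicalSpace β]
    [OrderClosedTopology β] {f : α → β} {a b : α} (hab : a < b) (hf : ContinuousOn f (Ioo a b))
    (ha : Tendsto f (𝓝[>] a) atBot) (hb : Tendsto f (𝓝[<] b) atTop) :
    SurjOn f (Ioo a b) univ :=
  hf.surjOn_of_tendsto (nonempty_Ioo.2 hab) ((tendsto_comp_coe_Ioo_atBot hab).2 ha)
    ((tendsto_comp_coe_Ioo_atTop hab).2 hb)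

theorem stmt_10_general {φ ψ c Δ : ℝ} {b b' : ℝ → ℝ} (hφψ : φ < ψ)
    (hderiv : ∀ y ∈ Ioo φ ψ, HasDerivAt b (b' y) y) (hb'_lt : ∀ y ∈ Ioo φ ψ, b' y < c)
    (hbφ : Tendsto b (𝓝[>] φ) atTop) (hbψ : Tendsto b (𝓝[<] ψ) atBot)
    (hΔ : 0 < Δ) (hΔc : Δ * c < 1) :
    StrictMonoOn (fun y => y - Δ * b y) (Ioo φ ψ)
      ∧ 0 < 1 - Δ * c
      ∧ (∀ y ∈ Ioo φ ψ,
          HasDerivAt (fun y => y - Δ * b y) (1 - Δ * b' y) y ∧ 1 - Δ * c < 1 - Δ * b' y)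
      ∧ BijOn (fun y => y - Δ * b y) (Ioo φ ψ) univ
      ∧ ∀ z : ℝ, ∃! y : ℝ, y ∈ Ioo φ ψ ∧ y - Δ * b y = z := by
  have one_sub_pos : 0 < 1 - Δ * c := sub_pos.2 hΔc
  have hasDeriv : ∀ y ∈ Ioo φ ψ, HasDerivAt (fun y => y - Δ * b y) (1 - Δ * b' y) y :=
    fun y hy => (hasDerivAt_id y).sub ((hderiv y hy).const_mul Δ)
  have lt_deriv : ∀ y ∈ Ioo φ ψ, 1 - Δ * c < 1 - Δ * b' y :=
    fun y hy => sub_lt_sub_left (mul_lt_mul_of_pos_left (hb'_lt y hy) hΔ) 1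
  have strictMono : StrictMonoOn (fun y => y - Δ * b y) (Ioo φ ψ) :=
    strictMonoOn_of_forall_hasDerivAt_pos (convex_Ioo φ ψ) hasDeriv
      fun y hy => one_sub_pos.trans (lt_deriv y hy)
  have surj : SurjOn (fun y => y - Δ * b y) (Ioo φ ψ) univ :=
    surjOn_Ioo_univ_of_tendsto hφψ (HasDerivAt.continuousOn hasDeriv)
      (tendsto_sub_const_mul_atBot hΔ (tendsto_id.mono_left nhdsWithin_le_nhds) hbφ)
      (tendsto_sub_const_mul_atTop hΔ (tendsto_id.mono_left nhdsWithin_le_nhds) hbψ)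
  have bij : BijOn (fun y => y - Δ * b y) (Ioo φ ψ) univ :=
    ⟨mapsTo_univ _ _, strictMono.injOn, surj⟩
  exact ⟨strictMono, one_sub_pos, fun y hy => ⟨hasDeriv y hy, lt_deriv y hy⟩, bij,
    fun z => existsUnique_mem_and_eq_of_bijOn bij (mem_univ z)⟩

/-- Under the sandwiched-drift assumptions (derivative bounded above by `c`,
blow-up of order `γ` near the bounds `φ < ψ`), for any step `Δ ∈ (0, 1/c)` the map
`β(y) = y - Δ b(y)` is strictly increasing on `(φ, ψ)`, has derivative `1 - Δ b'(y) >
1 - Δ c > 0`, and is a bijection from `(φ, ψ)` onto `ℝ`; in particular the drift-implicit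
Euler step has a unique solution. -/
theorem stmt_10
    (φ ψ c c' γ ystar : ℝ)
    (hφψ : φ < ψ) (hc : 0 < c) (hc' : 0 < c') (hγ : 0 < γ)
    (hystar : ystar ∈ Set.Ioo 0 ((ψ - φ) / 2))
    (b b' : ℝ → ℝ)
    (hderiv : ∀ y ∈ Set.Ioo φ ψ, HasDerivAt b (b' y) y)
    (hb'_cont : ContinuousOn b' (Set.Ioo φ ψ))
    (hb'_lt : ∀ y ∈ Set.Ioo φ ψ, b' y < c)
    (hlow : ∀ y : ℝ, φ < y → y ≤ φ + ystar → c' / (y - φ) ^ γ ≤ b y)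
    (hupp : ∀ y : ℝ, ψ - ystar ≤ y → y < ψ → b y ≤ -(c' / (ψ - y) ^ γ)) :
    ∀ Δ : ℝ, 0 < Δ → Δ < 1 / c →
      StrictMonoOn (fun y => y - Δ * b y) (Set.Ioo φ ψ)
        ∧ (0 < 1 - Δ * c)
        ∧ (∀ y ∈ Set.Ioo φ ψ,
            HasDerivAt (fun y => y - Δ * b y) (1 - Δ * b' y) y
              ∧ 1 - Δ * c < 1 - Δ * b' y)
        ∧ Set.BijOn (fun y => y - Δ * b y) (Set.Ioo φ ψ) Set.univ
        ∧ (∀ z : ℝ, ∃! y : ℝ, y ∈ Set.Ioo φ ψ ∧ y - Δ * b y = z) := by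
  intro Δ hΔ hΔc
  have low_near : ∀ᶠ y in 𝓝[>] φ, c' / (y - φ) ^ γ ≤ b y := by
    filter_upwards [Ioc_mem_nhdsGT (lt_add_of_pos_right φ hystar.1)] with y hy
      using hlow y hy.1 hy.2
  have upp_near : ∀ᶠ y in 𝓝[<] ψ, b y ≤ -(c' / (ψ - y) ^ γ) := by
    filter_upwards [Ico_mem_nhdsLT (sub_lt_self ψ hystar.1)] with y hy using hupp y hy.1 hy.2
  exact stmt_10_general hφψ hderiv hb'_lt
    (tendsto_nhdsGT_atTop_of_const_div_rpow_le hc' hγ low_near)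
    (tendsto_nhdsLT_atBot_of_le_neg_const_div_rpow hc' hγ upp_near) hΔ ((lt_div_iff₀ hc).1 hΔc)
end
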